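/- Let d ≥ 1 be an integer, σ > −d a real number, and ε ∈ (0,1). Suppose m : ℝ^d × ℝ^d → ℂ is such that for each fixed x ∈ ℝ^d, the map ξ ↦ m(x,ξ) is (d+2)-times continuously differentiable on ℝ^d \ {0} with |∇_ξ^k m(x,ξ)| ≤ |ξ|^{σ−k} for all integers 0 ≤ k ≤ d+2 and all ξ ≠ 0, uniformly in x. Let v : ℝ^d → ℂ be a measurable function with ∫_{ℝ^d} (|ξ|^{σ−ε} + |ξ|^{σ+ε}) |v(ξ)| dξ < ∞, and define T(x) := ∫_{ℝ^d} m(x,ξ) v(ξ) e^{i x·ξ} dξ, Λ₊(x) := ∫_{ℝ^d} |ξ|^{σ+ε} v(ξ) e^{i x·ξ} dξ, Λ₋(x) := ∫_{ℝ^d} |ξ|^{σ−ε} v(ξ) e^{i x·ξ} dξ. Then there is a constant C depending only on d, σ and ε such that sup_x |T(x)| ≤ C (sup_x |Λ₊(x)|)^{1/2} (sup_x |Λ₋(x)|)^{1/2}. -/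

import Mathlib

open MeasureTheory Set
open scoped InnerProductSpace
open Filter Module Topology
open scoped FourierTransform

/-!
Freeze `x` in the symbol: the bound to prove becomes one for a fixed Fourier multiplier `m`, with a
constant independent of `m`. Cut `m v` into Littlewood–Paley blocks at the scales `t = 2 ^ k R`. On
such a block `m(ξ) |ξ|^{-(σ ± ε)}`, dilated to unit scale, is a compactly supported symbol; it has
more derivatives than the dimension, so its Fourier transform is integrable, with a dilation
invariant norm. The block is therefore at most `C t^{∓ε}` times the supremum of `Λ^{σ ± ε} f`. The
`t^{-ε}` bounds sum geometrically over `t > R`, the `t^{ε}` bounds over `t ≤ R`, and optimizing the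
splitting frequency `R` gives the geometric mean.
-/

section Fourier

variable {V F : Type*} [NormedAddCommGroup V] [InnerProductSpace ℝ V] [FiniteDimensional ℝ V]
  [MeasurableSpace V] [BorelSpace V] [NormedAddCommGroup F] [NormedSpace ℂ F]

theorem fourierInv_two_pi_inv_smul (g : V → ℂ) (x : V) :
    𝓕⁻ g ((2 * Real.pi)⁻¹ • x) = ∫ ξ, g ξ * Complex.exp ((⟪x, ξ⟫_ℝ : ℂ) * Complex.I) := by
  rw [Real.fourierInv_eq']
  congr 1 with ξ
  rw [smul_eq_mul, mul_comm, inner_smul_right, mul_inv_cancel_left₀ Real.two_pi_pos.ne',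
    real_inner_comm]

theorem continuous_fourier {f : V → F} (hf : Integrable f) : Continuous (𝓕 f) :=
  VectorFourier.fourierIntegral_continuous Real.continuous_fourierChar continuous_inner hf

theorem fourierInv_smul_eq_integral_fourier_smul [CompleteSpace F] {h : V → ℂ} {w : V → F}
    (hc : Continuous h) (hi : Integrable h) (hF : Integrable (𝓕 h)) (hw : Integrable w) (x : V) :
    𝓕⁻ (fun ξ ↦ h ξ • w ξ) x = ∫ y, 𝓕 h y • 𝓕⁻ w (x + y) := by
  have hmod : Integrable fun ξ ↦ Real.fourierChar ⟪ξ, x⟫_ℝ • w ξ := by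
    simpa using (Real.fourierIntegral_convergent_iff (-x)).2 hw
  have hflip := VectorFourier.integral_fourierIntegral_smul_eq_flip (L := -innerₗ V)
    Real.continuous_fourierChar (by simpa using! continuous_inner.neg) hF hmod
  calc 𝓕⁻ (fun ξ ↦ h ξ • w ξ) x
      = ∫ ξ, 𝓕⁻ (𝓕 h) ξ • (Real.fourierChar ⟪ξ, x⟫_ℝ • w ξ) := by
        rw [hc.fourierInv_fourier_eq hi hF, Real.fourierInv_eq]
        simp only [smul_comm (h _)]
    _ = ∫ y, 𝓕 h y • 𝓕⁻ w (x + y) := by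
        refine hflip.trans (integral_congr_ae (.of_forall fun y ↦ ?_))
        simp only [Real.fourierInv_eq, VectorFourier.fourierIntegral]
        congr! 3 with _
        simp [inner_add_right, AddChar.map_add_eq_mul, smul_smul, real_inner_comm, mul_comm]

theorem norm_fourierInv_smul_le [CompleteSpace F] {h : V → ℂ} {w : V → F} {M : ℝ}
    (hc : Continuous h) (hi : Integrable h) (hF : Integrable (𝓕 h)) (hw : Integrable w)
    (hM : ∀ y, ‖𝓕⁻ w y‖ ≤ M) (x : V) :
    ‖𝓕⁻ (fun ξ ↦ h ξ • w ξ) x‖ ≤ (∫ y, ‖𝓕 h y‖) * M := by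
  rw [fourierInv_smul_eq_integral_fourier_smul hc hi hF hw, ← integral_mul_const]
  refine norm_integral_le_of_norm_le (hF.norm.mul_const M) (.of_forall fun y ↦ ?_)
  rw [norm_smul]
  gcongr
  exact hM _

theorem fourier_comp_smul (f : V → F) {t : ℝ} (ht : 0 < t) :
    𝓕 (fun ξ ↦ f (t • ξ)) = fun y ↦ (t ^ finrank ℝ V)⁻¹ • 𝓕 f (t⁻¹ • y) := by
  ext y
  rw [Real.fourier_eq, Real.fourier_eq, ← Measure.integral_comp_smul_of_nonneg _ _ _ (hR := ht.le)]
  simp [inner_smul_left, inner_smul_right, ht.ne']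

theorem integral_norm_fourier_comp_smul (f : V → F) {t : ℝ} (ht : 0 < t) :
    ∫ y, ‖𝓕 (fun ξ ↦ f (t • ξ)) y‖ = ∫ y, ‖𝓕 f y‖ := by
  simp only [fourier_comp_smul f ht, norm_smul, integral_const_mul]
  rw [Measure.integral_comp_inv_smul_of_nonneg volume (fun y ↦ ‖𝓕 f y‖) ht.le,
    Real.norm_of_nonneg (by positivity), smul_eq_mul, inv_mul_cancel_left₀ (by positivity)]

theorem norm_fourierInv_comp_smul_smul_le [CompleteSpace F] {h : V → ℂ} {w : V → F} {M t : ℝ}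
    (hc : Continuous h) (hi : Integrable h) (hF : Integrable (𝓕 h)) (ht : 0 < t)
    (hw : Integrable w) (hM : ∀ y, ‖𝓕⁻ w y‖ ≤ M) (x : V) :
    ‖𝓕⁻ (fun ξ ↦ h (t • ξ) • w ξ) x‖ ≤ (∫ y, ‖𝓕 h y‖) * M := by
  rw [← integral_norm_fourier_comp_smul h ht]
  refine norm_fourierInv_smul_le (by fun_prop) (hi.comp_smul ht.ne') ?_ hw hM x
  rw [fourier_comp_smul h ht]
  exact (hF.comp_smul (inv_ne_zero ht.ne')).smul _

theorem one_add_norm_pow_mul_norm_fourier_le {n : ℕ} {f : V → F} (hf : ContDiff ℝ n f)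
    (hfi : ∀ k ≤ n, Integrable (iteratedFDeriv ℝ k f)) (y : V) :
    (1 + ‖y‖) ^ n * ‖𝓕 f y‖ ≤
      2 * 4 ^ n * ∑ k ∈ Finset.range (n + 1), ∫ ξ, ‖iteratedFDeriv ℝ k f ξ‖ := by
  set S := ∑ k ∈ Finset.range (n + 1), ∫ ξ, ‖iteratedFDeriv ℝ k f ξ‖
  have hlow : ‖𝓕 f y‖ ≤ S := calc
    ‖𝓕 f y‖ ≤ ∫ ξ, ‖iteratedFDeriv ℝ 0 f ξ‖ := by
      simpa using! VectorFourier.norm_fourierIntegral_le_integral_norm _ _ _ f y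
    _ ≤ S := Finset.single_le_sum (f := fun k ↦ ∫ ξ, ‖iteratedFDeriv ℝ k f ξ‖)
      (fun _ _ ↦ by positivity) (by simp)
  have hhigh : ‖y‖ ^ n * ‖𝓕 f y‖ ≤ 2 ^ n * S := by
    have := Real.pow_mul_norm_iteratedFDeriv_fourier_le (K := 0) (N := n) (f := f) hf
      (fun k j hk hj ↦ by
        obtain rfl : k = 0 := by simpa using hk
        simpa using (hfi j (by exact_mod_cast hj)).norm) (k := 0) (n := n) le_rfl le_rfl y
    simpa [Finset.sum_product, S] using this
  have hconv : (1 + ‖y‖) ^ n ≤ 2 ^ n * (1 + ‖y‖ ^ n) := calc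
    (1 + ‖y‖) ^ n ≤ 2 ^ (n - 1) * (1 ^ n + ‖y‖ ^ n) := add_pow_le zero_le_one (norm_nonneg y) n
    _ ≤ 2 ^ n * (1 + ‖y‖ ^ n) := by
      rw [one_pow]
      gcongr
      exacts [one_le_two, n.sub_le 1]
  have hS : 0 ≤ S := (norm_nonneg _).trans hlow
  calc (1 + ‖y‖) ^ n * ‖𝓕 f y‖ ≤ 2 ^ n * (1 + ‖y‖ ^ n) * ‖𝓕 f y‖ := by gcongr
    _ = 2 ^ n * (‖𝓕 f y‖ + ‖y‖ ^ n * ‖𝓕 f y‖) := by ring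
    _ ≤ 2 ^ n * (2 ^ n * S + 2 ^ n * S) := by
      gcongr
      exact hlow.trans (le_mul_of_one_le_left hS (one_le_pow₀ one_le_two))
    _ = 2 * 4 ^ n * S := by
      rw [show (4 : ℝ) = 2 * 2 by norm_num, mul_pow]
      ring

theorem norm_fourier_le_mul_one_add_norm_rpow_neg {n : ℕ} {f : V → F} (hf : ContDiff ℝ n f)
    (hfi : ∀ k ≤ n, Integrable (iteratedFDeriv ℝ k f)) (y : V) :
    ‖𝓕 f y‖ ≤ 2 * 4 ^ n * (∑ k ∈ Finset.range (n + 1), ∫ ξ, ‖iteratedFDeriv ℝ k f ξ‖) *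
      (1 + ‖y‖) ^ (-n : ℝ) := by
  rw [Real.rpow_neg (by positivity), Real.rpow_natCast, ← div_eq_mul_inv,
    le_div_iff₀ (by positivity), mul_comm]
  exact one_add_norm_pow_mul_norm_fourier_le hf hfi y

theorem integrable_fourier_of_contDiff {n : ℕ} (hn : finrank ℝ V < n) {f : V → F}
    (hf : ContDiff ℝ n f) (hfi : ∀ k ≤ n, Integrable (iteratedFDeriv ℝ k f)) :
    Integrable (𝓕 f) := by
  have hf0 : Integrable f :=
    (integrable_norm_iff hf.continuous.aestronglyMeasurable).1
      (by simpa using (hfi 0 n.zero_le).norm)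
  exact ((integrable_one_add_norm (by exact_mod_cast hn)).const_mul _).mono'
    (continuous_fourier hf0).aestronglyMeasurable
    (.of_forall (norm_fourier_le_mul_one_add_norm_rpow_neg hf hfi))

theorem integral_norm_fourier_le {n : ℕ} (hn : finrank ℝ V < n) {f : V → F}
    (hf : ContDiff ℝ n f) (hfi : ∀ k ≤ n, Integrable (iteratedFDeriv ℝ k f)) :
    ∫ y, ‖𝓕 f y‖ ≤ (2 * 4 ^ n * ∫ y : V, (1 + ‖y‖) ^ (-n : ℝ)) *
      ∑ k ∈ Finset.range (n + 1), ∫ ξ, ‖iteratedFDeriv ℝ k f ξ‖ := by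
  rw [mul_right_comm, ← integral_const_mul]
  exact integral_mono (integrable_fourier_of_contDiff hn hf hfi).norm
    ((integrable_one_add_norm (by exact_mod_cast hn)).const_mul _)
    (norm_fourier_le_mul_one_add_norm_rpow_neg hf hfi)

end Fourier

/-- `m` is a symbol of order `σ` with `n` derivatives and constant `A`: away from the origin it is
`C^n` and its `k`-th derivative is at most `A * ‖ξ‖ ^ (σ - k)` for each `k ≤ n`. The constant is
part of the notion because the interpolation argument dilates symbols and must keep track of it. -/
structure IsMikhlinSymbol {E F : Type*} [NormedAddCommGroup E] [NormedSpace ℝ E]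
    [NormedAddCommGroup F] [NormedSpace ℝ F] (n : ℕ) (σ A : ℝ) (m : E → F) : Prop where
  contDiffOn : ContDiffOn ℝ n m {0}ᶜ
  norm_iteratedFDerivWithin_le : ∀ k ≤ n, ∀ ξ ≠ 0,
    ‖iteratedFDerivWithin ℝ k m {0}ᶜ ξ‖ ≤ A * ‖ξ‖ ^ (σ - k)

section Symbol

variable {E F : Type*} [NormedAddCommGroup E] [NormedSpace ℝ E] [NormedAddCommGroup F]
  [NormedSpace ℝ F]

theorem contDiff_of_contDiffOn_compl_zero {n : WithTop ℕ∞} {f : E → F}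
    (hf : ContDiffOn ℝ n f {0}ᶜ) (h0 : 0 ∉ tsupport f) : ContDiff ℝ n f := by
  refine contDiff_iff_contDiffAt.2 fun ξ ↦ ?_
  by_cases hξ : ξ ∈ tsupport f
  · exact hf.contDiffAt (isOpen_compl_singleton.mem_nhds (ne_of_mem_of_not_mem hξ h0))
  · exact contDiffAt_const.congr_of_eventuallyEq (notMem_tsupport_iff_eventuallyEq.1 hξ)

theorem iteratedFDeriv_eq_zero_of_notMem_tsupport {f : E → F} {ξ : E} (hξ : ξ ∉ tsupport f)
    (k : ℕ) : iteratedFDeriv ℝ k f ξ = 0 :=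
  image_eq_zero_of_notMem_tsupport fun h ↦ hξ (tsupport_iteratedFDeriv_subset k h)

namespace IsMikhlinSymbol

variable {n : ℕ} {σ τ A B : ℝ}

theorem norm_le {m : E → F} (hm : IsMikhlinSymbol n σ A m) {ξ : E} (hξ : ξ ≠ 0) :
    ‖m ξ‖ ≤ A * ‖ξ‖ ^ σ := by
  simpa using hm.norm_iteratedFDerivWithin_le 0 n.zero_le ξ hξ

theorem norm_iteratedFDeriv_le {m : E → F} (hm : IsMikhlinSymbol n σ A m) {k : ℕ} (hk : k ≤ n)
    {ξ : E} (hξ : ξ ≠ 0) : ‖iteratedFDeriv ℝ k m ξ‖ ≤ A * ‖ξ‖ ^ (σ - k) := by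
  rw [← iteratedFDerivWithin_of_isOpen k isOpen_compl_singleton hξ]
  exact hm.norm_iteratedFDerivWithin_le k hk ξ hξ

theorem const_nonneg [Nontrivial E] {m : E → F} (hm : IsMikhlinSymbol n σ A m) : 0 ≤ A := by
  obtain ⟨ξ, hξ⟩ := exists_ne (0 : E)
  have := (norm_nonneg _).trans (hm.norm_le hξ)
  exact nonneg_of_mul_nonneg_left this (by positivity)

theorem smul {f : E → ℝ} {g : E → F} (hf : IsMikhlinSymbol n σ A f)
    (hg : IsMikhlinSymbol n τ B g) :
    IsMikhlinSymbol n (σ + τ) (2 ^ n * (A * B)) fun ξ ↦ f ξ • g ξ where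
  contDiffOn := hf.contDiffOn.smul hg.contDiffOn
  norm_iteratedFDerivWithin_le k hk ξ hξ := by
    have hξ' : 0 < ‖ξ‖ := norm_pos_iff.2 hξ
    have hAB : 0 ≤ A * ‖ξ‖ ^ σ * (B * ‖ξ‖ ^ τ) :=
      mul_nonneg ((norm_nonneg _).trans (hf.norm_le hξ)) ((norm_nonneg _).trans (hg.norm_le hξ))
    have hterm : ∀ i ∈ Finset.range (k + 1),
        k.choose i * ‖iteratedFDerivWithin ℝ i f {0}ᶜ ξ‖ *
          ‖iteratedFDerivWithin ℝ (k - i) g {0}ᶜ ξ‖ ≤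
        k.choose i * (A * B * ‖ξ‖ ^ (σ + τ - k)) := by
      intro i hi
      have hik : i ≤ k := Finset.mem_range_succ_iff.1 hi
      have hfi := hf.norm_iteratedFDerivWithin_le i (hik.trans hk) ξ hξ
      have hgi := hg.norm_iteratedFDerivWithin_le (k - i) (by lia) ξ hξ
      have hexp : σ + τ - k = σ - i + (τ - (k - i : ℕ)) := by
        push_cast [hik]
        ring
      rw [mul_assoc, hexp, Real.rpow_add hξ', mul_mul_mul_comm]
      gcongr
      exact (norm_nonneg _).trans hfi
    calc ‖iteratedFDerivWithin ℝ k (fun ξ ↦ f ξ • g ξ) {0}ᶜ ξ‖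
        ≤ ∑ i ∈ Finset.range (k + 1), k.choose i * ‖iteratedFDerivWithin ℝ i f {0}ᶜ ξ‖ *
            ‖iteratedFDerivWithin ℝ (k - i) g {0}ᶜ ξ‖ :=
          norm_iteratedFDerivWithin_smul_le hf.contDiffOn hg.contDiffOn
            isOpen_compl_singleton.uniqueDiffOn hξ (by exact_mod_cast hk)
      _ ≤ ∑ i ∈ Finset.range (k + 1), k.choose i * (A * B * ‖ξ‖ ^ (σ + τ - k)) :=
          Finset.sum_le_sum hterm
      _ = 2 ^ k * (A * B * ‖ξ‖ ^ (σ + τ - k)) := by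
          rw [← Finset.sum_mul]
          congr 1
          exact_mod_cast Nat.sum_range_choose k
      _ ≤ 2 ^ n * (A * B * ‖ξ‖ ^ (σ + τ - k)) := by
          gcongr
          · rw [Real.rpow_sub hξ', Real.rpow_add hξ', ← mul_div_assoc, ← mul_mul_mul_comm]
            positivity
          · exact one_le_two
      _ = 2 ^ n * (A * B) * ‖ξ‖ ^ (σ + τ - k) := by ring

theorem comp_smul {m : E → F} (hm : IsMikhlinSymbol n σ A m) {t : ℝ} (ht : 0 < t) :
    IsMikhlinSymbol n σ (A * t ^ σ) fun ξ ↦ m (t • ξ) := by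
  let g : E ≃L[ℝ] E := ContinuousLinearEquiv.smulLeft (Units.mk0 t ht.ne')
  have hg : ⇑g ⁻¹' {0}ᶜ = {0}ᶜ := by
    ext ξ
    simp
  have hgt : ‖(g : E →L[ℝ] E)‖ ≤ t :=
    ContinuousLinearMap.opNorm_le_bound _ ht.le fun ξ ↦
      (norm_smul t ξ).trans_le (by rw [Real.norm_of_nonneg ht.le])
  refine ⟨hg ▸ hm.contDiffOn.comp_continuousLinearMap (g : E →L[ℝ] E), fun k hk ξ hξ ↦ ?_⟩
  have hgξ : g ξ ≠ 0 := by simpa using hξ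
  have hcomp := g.iteratedFDerivWithin_comp_right m isOpen_compl_singleton.uniqueDiffOn hgξ k
  rw [hg] at hcomp
  calc ‖iteratedFDerivWithin ℝ k (m ∘ g) {0}ᶜ ξ‖
      ≤ ‖iteratedFDerivWithin ℝ k m {0}ᶜ (g ξ)‖ * ∏ _i : Fin k, ‖(g : E →L[ℝ] E)‖ := by
        rw [hcomp]
        exact ContinuousMultilinearMap.norm_compContinuousLinearMap_le _ _
    _ ≤ A * ‖g ξ‖ ^ (σ - k) * t ^ k := by
        rw [Finset.prod_const, Finset.card_univ, Fintype.card_fin]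
        have hmk := hm.norm_iteratedFDerivWithin_le k hk (g ξ) hgξ
        have := (norm_nonneg _).trans hmk
        gcongr
    _ = A * t ^ σ * ‖ξ‖ ^ (σ - k) := by
        have hgn : ‖g ξ‖ = t * ‖ξ‖ := by
          rw [← Real.norm_of_nonneg ht.le]
          exact norm_smul t ξ
        rw [hgn, Real.mul_rpow ht.le (norm_nonneg _), Real.rpow_sub ht, Real.rpow_natCast]
        field_simp

theorem exists_of_hasCompactSupport {ψ : E → F} (hψ : ContDiff ℝ n ψ) (hc : HasCompactSupport ψ)
    (h0 : 0 ∉ tsupport ψ) (σ : ℝ) : ∃ A, IsMikhlinSymbol n σ A ψ := by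
  let q : ℕ → E → ℝ := fun k ξ ↦ ‖iteratedFDeriv ℝ k ψ ξ‖ / ‖ξ‖ ^ (σ - k)
  have hq : ContinuousOn (fun ξ ↦ ∑ k ∈ Finset.range (n + 1), q k ξ) (tsupport ψ) := by
    refine continuousOn_finsetSum _ fun k hk ξ hξ ↦ ContinuousAt.continuousWithinAt ?_
    have hξ0 : ‖ξ‖ ≠ 0 := norm_ne_zero_iff.2 (ne_of_mem_of_not_mem hξ h0)
    have hk' : (k : WithTop ℕ∞) ≤ n := by exact_mod_cast Finset.mem_range_succ_iff.1 hk
    exact (hψ.continuous_iteratedFDeriv hk').norm.continuousAt.div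
      (continuous_norm.continuousAt.rpow_const (.inl hξ0))
      (Real.rpow_pos_of_pos (by positivity) _).ne'
  obtain ⟨A, hA⟩ := hc.isCompact.exists_bound_of_continuousOn hq
  refine ⟨max A 0, hψ.contDiffOn, fun k hk ξ hξ ↦ ?_⟩
  rw [iteratedFDerivWithin_of_isOpen k isOpen_compl_singleton hξ]
  by_cases hξψ : ξ ∈ tsupport ψ
  · rw [← div_le_iff₀ (by positivity)]
    calc q k ξ ≤ ∑ k ∈ Finset.range (n + 1), q k ξ :=
          Finset.single_le_sum (f := fun k ↦ q k ξ) (fun _ _ ↦ by positivity)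
            (Finset.mem_range_succ_iff.2 hk)
      _ ≤ A := (le_abs_self _).trans (hA ξ hξψ)
      _ ≤ max A 0 := le_max_left A 0
  · rw [iteratedFDeriv_eq_zero_of_notMem_tsupport hξψ, norm_zero]
    positivity

end IsMikhlinSymbol

end Symbol

section WienerNorm

variable {V : Type*} [NormedAddCommGroup V] [InnerProductSpace ℝ V] [FiniteDimensional ℝ V]
  [MeasurableSpace V] [BorelSpace V] {n : ℕ}

theorem IsMikhlinSymbol.integral_norm_iteratedFDeriv_le {E F : Type*} [NormedAddCommGroup E]
    [NormedSpace ℝ E] [MeasurableSpace E] [OpensMeasurableSpace E] {μ : Measure E}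
    [IsFiniteMeasureOnCompacts μ] [NormedAddCommGroup F] [NormedSpace ℝ F] {σ A : ℝ} {h : E → F}
    (hh : IsMikhlinSymbol n σ A h) {K : Set E} (hK : IsCompact K) (h0 : 0 ∉ K)
    (hsupp : tsupport h ⊆ K) {k : ℕ} (hk : k ≤ n) :
    ∫ ξ, ‖iteratedFDeriv ℝ k h ξ‖ ∂μ ≤ A * ∫ ξ in K, ‖ξ‖ ^ (σ - k) ∂μ := by
  have hne : ∀ ξ ∈ K, ξ ≠ 0 := fun ξ hξ ↦ ne_of_mem_of_not_mem hξ h0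
  have hcont : ContinuousOn (fun ξ : E ↦ ‖ξ‖ ^ (σ - k)) K := fun ξ hξ ↦
    (continuous_norm.continuousAt.rpow_const (.inl (norm_ne_zero_iff.2 (hne ξ hξ))))
      |>.continuousWithinAt
  rw [← integral_const_mul, ← setIntegral_eq_integral_of_forall_compl_eq_zero fun ξ hξ ↦ by
    rw [iteratedFDeriv_eq_zero_of_notMem_tsupport (fun h ↦ hξ (hsupp h)), norm_zero]]
  refine integral_mono_of_nonneg (.of_forall fun _ ↦ norm_nonneg _)
    ((hcont.integrableOn_compact hK).const_mul A) ?_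
  filter_upwards [ae_restrict_mem hK.measurableSet] with ξ hξ
  exact hh.norm_iteratedFDeriv_le hk (hne ξ hξ)

theorem exists_integral_norm_fourier_le (hn : finrank ℝ V < n) {K : Set V} (hK : IsCompact K)
    (h0 : 0 ∉ K) (σ : ℝ) : ∃ C, 0 ≤ C ∧ ∀ {h : V → ℂ} {A : ℝ}, IsMikhlinSymbol n σ A h →
      tsupport h ⊆ K → Integrable (𝓕 h) ∧ ∫ y, ‖𝓕 h y‖ ≤ C * A := by
  have : 0 ≤ ∫ y : V, (1 + ‖y‖) ^ (-n : ℝ) := integral_nonneg fun y ↦ by positivity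
  refine ⟨(2 * 4 ^ n * ∫ y : V, (1 + ‖y‖) ^ (-n : ℝ)) *
    ∑ k ∈ Finset.range (n + 1), ∫ ξ in K, ‖ξ‖ ^ (σ - k), by positivity, fun {h A} hh hsupp ↦ ?_⟩
  have hsmooth : ContDiff ℝ n h :=
    contDiff_of_contDiffOn_compl_zero hh.contDiffOn fun h ↦ h0 (hsupp h)
  have hcomp : HasCompactSupport h := hK.of_isClosed_subset (isClosed_tsupport h) hsupp
  have hint : ∀ k ≤ n, Integrable (iteratedFDeriv ℝ k h) := fun k hk ↦
    (hsmooth.continuous_iteratedFDeriv (by exact_mod_cast hk)).integrable_of_hasCompactSupport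
      (hcomp.iteratedFDeriv k)
  refine ⟨integrable_fourier_of_contDiff hn hsmooth hint, ?_⟩
  refine (integral_norm_fourier_le hn hsmooth hint).trans ?_
  rw [mul_assoc _ _ A, Finset.sum_mul]
  gcongr with k hk
  rw [mul_comm]
  exact hh.integral_norm_iteratedFDeriv_le hK h0 hsupp (Finset.mem_range_succ_iff.1 hk)

theorem exists_norm_fourierInv_cutoff_smul_le [Nontrivial V] {F : Type*} [NormedAddCommGroup F]
    [NormedSpace ℂ F] [CompleteSpace F] (hn : finrank ℝ V < n) {ψ : V → ℝ}
    (hψ : ContDiff ℝ n ψ) (hc : HasCompactSupport ψ) (h0 : 0 ∉ tsupport ψ) (σ : ℝ) :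
    ∃ C, 0 ≤ C ∧ ∀ {m : V → ℂ} {A : ℝ}, IsMikhlinSymbol n σ A m → ∀ {w : V → F} {M : ℝ},
      Integrable w → (∀ y, ‖𝓕⁻ w y‖ ≤ M) → ∀ {t : ℝ}, 0 < t → ∀ x,
        ‖𝓕⁻ (fun ξ ↦ (ψ (t⁻¹ • ξ) • m ξ) • w ξ) x‖ ≤ C * A * t ^ σ * M := by
  obtain ⟨B, hB⟩ := IsMikhlinSymbol.exists_of_hasCompactSupport hψ hc h0 0
  obtain ⟨C, hC, hCle⟩ := exists_integral_norm_fourier_le hn hc h0 σ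
  have hB0 := hB.const_nonneg
  refine ⟨C * (2 ^ n * B), by positivity, fun {m A} hm w M hw hM t ht x ↦ ?_⟩
  set h : V → ℂ := fun η ↦ ψ η • m (t • η) with hh
  have hsymb : IsMikhlinSymbol n σ (2 ^ n * (B * (A * t ^ σ))) h := by
    simpa only [zero_add] using hB.smul (hm.comp_smul ht)
  have hsupp : tsupport h ⊆ tsupport ψ :=
    closure_mono (Function.support_smul_subset_left ψ fun η ↦ m (t • η))
  have hcont : Continuous h :=
    (contDiff_of_contDiffOn_compl_zero hsymb.contDiffOn fun h ↦ h0 (hsupp h)).continuous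
  have hcomp : HasCompactSupport h := hc.of_isClosed_subset (isClosed_tsupport h) hsupp
  obtain ⟨hF, hFle⟩ := hCle hsymb hsupp
  calc ‖𝓕⁻ (fun ξ ↦ (ψ (t⁻¹ • ξ) • m ξ) • w ξ) x‖
      = ‖𝓕⁻ (fun ξ ↦ h (t⁻¹ • ξ) • w ξ) x‖ := by simp only [hh, smul_inv_smul₀ ht.ne']
    _ ≤ (∫ y, ‖𝓕 h y‖) * M :=
        norm_fourierInv_comp_smul_smul_le hcont (hcont.integrable_of_hasCompactSupport hcomp) hF
          (inv_pos.2 ht) hw hM x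
    _ ≤ C * (2 ^ n * (B * (A * t ^ σ))) * M := by
        gcongr
        exact (norm_nonneg _).trans (hM 0)
    _ = C * (2 ^ n * B) * A * t ^ σ * M := by ring

end WienerNorm

section LittlewoodPaley

section Cutoff

variable {V : Type*} [NormedAddCommGroup V] [InnerProductSpace ℝ V]

variable (V) in
/-- The smooth low-pass cutoff, equal to `1` on the unit ball and to `0` outside the ball of radius
`2`; its dilate `lowPassCutoff V (t⁻¹ • ξ)` selects the frequencies `‖ξ‖ ≲ t`. -/
noncomputable def lowPassCutoff : ContDiffBump (0 : V) := ⟨1, 2, one_pos, one_lt_two⟩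

/-- The Littlewood–Paley bump `χ(ξ) - χ(2ξ)`, supported in `1/2 ≤ ‖ξ‖ ≤ 2`, where `χ` is
`lowPassCutoff`; its dilates at the scales `2 ^ k` telescope to `1` away from the origin. -/
noncomputable def annularCutoff (ξ : V) : ℝ := lowPassCutoff V ξ - lowPassCutoff V ((2 : ℝ) • ξ)

theorem contDiff_annularCutoff {n : ℕ} : ContDiff ℝ n (annularCutoff : V → ℝ) :=
  (lowPassCutoff V).contDiff.sub ((lowPassCutoff V).contDiff.comp (contDiff_const_smul 2))

theorem support_annularCutoff_subset :
    Function.support (annularCutoff : V → ℝ) ⊆ Metric.closedBall 0 2 \ Metric.ball 0 2⁻¹ := by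
  intro ξ hξ
  have hdist : dist ((2 : ℝ) • ξ) 0 = 2 * dist ξ 0 := by
    rw [dist_zero_right, dist_zero_right, norm_smul, Real.norm_two]
  refine ⟨Metric.mem_closedBall.2 (not_lt.1 fun h ↦ hξ ?_), fun h ↦ hξ ?_⟩
  · rw [annularCutoff, (lowPassCutoff V).zero_of_le_dist h.le,
      (lowPassCutoff V).zero_of_le_dist, sub_zero]
    change 2 ≤ dist ((2 : ℝ) • ξ) 0
    linarith
  · rw [Metric.mem_ball] at h
    rw [annularCutoff, (lowPassCutoff V).one_of_mem_closedBall,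
      (lowPassCutoff V).one_of_mem_closedBall, sub_self]
    · change dist ((2 : ℝ) • ξ) 0 ≤ 1
      linarith
    · change dist ξ 0 ≤ 1
      linarith

theorem tsupport_annularCutoff_subset :
    tsupport (annularCutoff : V → ℝ) ⊆ Metric.closedBall 0 2 \ Metric.ball 0 2⁻¹ :=
  closure_minimal support_annularCutoff_subset
    (Metric.isClosed_closedBall.sdiff Metric.isOpen_ball)

theorem hasCompactSupport_annularCutoff [FiniteDimensional ℝ V] :
    HasCompactSupport (annularCutoff : V → ℝ) :=
  (isCompact_closedBall 0 2).of_isClosed_subset (isClosed_tsupport _)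
    (tsupport_annularCutoff_subset.trans sdiff_subset)

theorem zero_notMem_tsupport_annularCutoff : (0 : V) ∉ tsupport annularCutoff := fun h ↦
  (tsupport_annularCutoff_subset h).2 (Metric.mem_ball_self (by positivity))

/-- The Littlewood–Paley bump divided by `‖ξ‖ ^ s`, through which a block of `v` is expressed as a
block of `‖ξ‖ ^ s • v`. -/
noncomputable def weightedAnnularCutoff (s : ℝ) (ξ : V) : ℝ := ‖ξ‖ ^ (-s) * annularCutoff ξ

theorem tsupport_weightedAnnularCutoff_subset (s : ℝ) :
    tsupport (weightedAnnularCutoff s : V → ℝ) ⊆ tsupport annularCutoff :=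
  closure_mono (Function.support_mul_subset_right (fun ξ : V ↦ ‖ξ‖ ^ (-s)) annularCutoff)

theorem hasCompactSupport_weightedAnnularCutoff [FiniteDimensional ℝ V] (s : ℝ) :
    HasCompactSupport (weightedAnnularCutoff s : V → ℝ) :=
  hasCompactSupport_annularCutoff.of_isClosed_subset (isClosed_tsupport _)
    (tsupport_weightedAnnularCutoff_subset s)

theorem zero_notMem_tsupport_weightedAnnularCutoff (s : ℝ) :
    (0 : V) ∉ tsupport (weightedAnnularCutoff s) := fun h ↦
  zero_notMem_tsupport_annularCutoff (tsupport_weightedAnnularCutoff_subset s h)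

theorem contDiff_weightedAnnularCutoff {n : ℕ} (s : ℝ) :
    ContDiff ℝ n (weightedAnnularCutoff s : V → ℝ) := by
  refine contDiff_of_contDiffOn_compl_zero (fun ξ hξ ↦ ContDiffAt.contDiffWithinAt ?_)
    (zero_notMem_tsupport_weightedAnnularCutoff s)
  exact ((contDiffAt_norm ℝ hξ).rpow_const_of_ne (norm_ne_zero_iff.2 hξ)).mul
    contDiff_annularCutoff.contDiffAt

theorem annularCutoff_inv_smul_eq (s : ℝ) {t : ℝ} (ht : 0 < t) (ξ : V) :
    annularCutoff (t⁻¹ • ξ) = t ^ (-s) * weightedAnnularCutoff s (t⁻¹ • ξ) * ‖ξ‖ ^ s := by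
  rcases eq_or_ne ξ 0 with rfl | hξ
  · simp [weightedAnnularCutoff,
      image_eq_zero_of_notMem_tsupport zero_notMem_tsupport_annularCutoff]
  have hξ' : 0 < ‖ξ‖ := norm_pos_iff.2 hξ
  have hnorm : ‖t⁻¹ • ξ‖ = t⁻¹ * ‖ξ‖ := by rw [norm_smul, norm_inv, Real.norm_of_nonneg ht.le]
  rw [weightedAnnularCutoff, hnorm, Real.mul_rpow (by positivity) hξ'.le, Real.inv_rpow ht.le,
    Real.rpow_neg ht.le, Real.rpow_neg hξ'.le]
  field_simp

theorem norm_lowPassCutoff_le_one (ξ : V) : ‖lowPassCutoff V ξ‖ ≤ 1 := by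
  rw [Real.norm_of_nonneg (lowPassCutoff V).nonneg]
  exact (lowPassCutoff V).le_one

theorem tendsto_lowPassCutoff_inv_smul_atTop (ξ : V) :
    Tendsto (fun t : ℝ ↦ lowPassCutoff V (t⁻¹ • ξ)) atTop (𝓝 1) := by
  have hlim : Tendsto (fun t : ℝ ↦ t⁻¹ • ξ) atTop (𝓝 0) := by
    simpa using (tendsto_inv_atTop_zero (𝕜 := ℝ)).smul_const ξ
  exact tendsto_const_nhds.congr' (hlim.eventually (lowPassCutoff V).eventuallyEq_one.symm)

theorem tendsto_lowPassCutoff_inv_smul_nhdsGT_zero {ξ : V} (hξ : ξ ≠ 0) :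
    Tendsto (fun t : ℝ ↦ lowPassCutoff V (t⁻¹ • ξ)) (𝓝[>] 0) (𝓝 0) := by
  have hlim : Tendsto (fun t : ℝ ↦ t⁻¹ * ‖ξ‖) (𝓝[>] 0) atTop :=
    tendsto_inv_nhdsGT_zero.atTop_mul_const (norm_pos_iff.2 hξ)
  refine tendsto_const_nhds.congr' ?_
  filter_upwards [hlim.eventually_ge_atTop 2, self_mem_nhdsWithin] with t ht ht0
  refine ((lowPassCutoff V).zero_of_le_dist ?_).symm
  rwa [dist_zero_right, norm_smul, norm_inv, Real.norm_of_nonneg (le_of_lt ht0)]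

end Cutoff

variable {V F : Type*} [NormedAddCommGroup V] [InnerProductSpace ℝ V] [FiniteDimensional ℝ V]
  [MeasurableSpace V] [BorelSpace V] [NormedAddCommGroup F] [NormedSpace ℂ F]

theorem tendsto_fourierInv_smul {ι : Type*} {l : Filter ι} [l.IsCountablyGenerated]
    {χ : ι → V → ℝ} {a : ℝ} {g : V → F} (hg : Integrable g)
    (hmeas : ∀ i, AEStronglyMeasurable (χ i)) (hle : ∀ i ξ, ‖χ i ξ‖ ≤ 1)
    (hlim : ∀ᵐ ξ, Tendsto (fun i ↦ χ i ξ) l (𝓝 a)) (x : V) :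
    Tendsto (fun i ↦ 𝓕⁻ (fun ξ ↦ χ i ξ • g ξ) x) l (𝓝 (𝓕⁻ (fun ξ ↦ a • g ξ) x)) := by
  simp only [Real.fourierInv_eq]
  refine tendsto_integral_filter_of_dominated_convergence (fun ξ ↦ ‖g ξ‖)
    (.of_forall fun i ↦ ?_) (.of_forall fun i ↦ .of_forall fun ξ ↦ ?_) hg.norm ?_
  · have hphase : Continuous fun ξ : V ↦ Real.fourierChar ⟪ξ, x⟫_ℝ := by fun_prop
    exact hphase.aestronglyMeasurable.smul ((hmeas i).smul hg.aestronglyMeasurable)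
  · rw [Circle.norm_smul, norm_smul]
    exact mul_le_of_le_one_left (norm_nonneg _) (hle i ξ)
  · filter_upwards [hlim] with ξ hξ
    exact (hξ.smul_const (g ξ)).const_smul _

/-- The inverse Fourier transform of `g` truncated smoothly to the frequencies `‖ξ‖ ≲ t`. -/
noncomputable def lowPass (g : V → F) (x : V) (t : ℝ) : F :=
  𝓕⁻ (fun ξ ↦ lowPassCutoff V (t⁻¹ • ξ) • g ξ) x

theorem integrable_lowPassCutoff_smul {g : V → F} (hg : Integrable g) (c : ℝ) :
    Integrable fun ξ ↦ lowPassCutoff V (c • ξ) • g ξ :=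
  hg.bdd_smul (𝕜 := ℝ) 1
    ((lowPassCutoff V).continuous.comp (continuous_const_smul c)).aestronglyMeasurable
    (.of_forall fun _ ↦ norm_lowPassCutoff_le_one _)

theorem tendsto_lowPass {l : Filter ℝ} [l.IsCountablyGenerated] {a : ℝ} {g : V → F}
    (hg : Integrable g) (hl : ∀ᵐ ξ, Tendsto (fun t : ℝ ↦ lowPassCutoff V (t⁻¹ • ξ)) l (𝓝 a))
    (x : V) : Tendsto (lowPass g x) l (𝓝 (𝓕⁻ (fun ξ ↦ a • g ξ) x)) :=
  tendsto_fourierInv_smul hg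
    (fun _ ↦ ((lowPassCutoff V).continuous.comp (continuous_const_smul _)).aestronglyMeasurable)
    (fun _ _ ↦ norm_lowPassCutoff_le_one _) hl x

theorem tendsto_lowPass_atTop {g : V → F} (hg : Integrable g) (x : V) :
    Tendsto (lowPass g x) atTop (𝓝 (𝓕⁻ g x)) := by
  simpa only [one_smul] using
    tendsto_lowPass hg (.of_forall tendsto_lowPassCutoff_inv_smul_atTop) x

theorem tendsto_lowPass_nhdsGT_zero [Nontrivial V] {g : V → F} (hg : Integrable g) (x : V) :
    Tendsto (lowPass g x) (𝓝[>] 0) (𝓝 0) := by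
  have h := tendsto_lowPass (l := 𝓝[>] 0) hg
    ((Measure.ae_ne volume 0).mono fun _ ↦ tendsto_lowPassCutoff_inv_smul_nhdsGT_zero) x
  simpa [Real.fourierInv_eq] using h

theorem lowPass_sub_lowPass_half {g : V → F} (hg : Integrable g) (x : V) (t : ℝ) :
    lowPass g x t - lowPass g x (t / 2) = 𝓕⁻ (fun ξ ↦ annularCutoff (t⁻¹ • ξ) • g ξ) x := by
  have hhalf : ∀ ξ : V, (t / 2)⁻¹ • ξ = (2 : ℝ) • t⁻¹ • ξ := fun ξ ↦ by
    rw [smul_smul, inv_div, div_eq_mul_inv]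
  have hint : ∀ c : ℝ, Integrable fun ξ ↦
      Real.fourierChar ⟪ξ, x⟫_ℝ • (lowPassCutoff V (c • ξ) • g ξ) := fun c ↦ by
    simpa using (Real.fourierIntegral_convergent_iff (-x)).2 (integrable_lowPassCutoff_smul hg c)
  rw [lowPass, lowPass, Real.fourierInv_eq, Real.fourierInv_eq, Real.fourierInv_eq,
    ← integral_sub (hint _) (hint _)]
  simp only [hhalf, annularCutoff, sub_smul, smul_sub]

theorem exists_norm_lowPass_sub_lowPass_half_le [Nontrivial V] [CompleteSpace F] {n : ℕ}
    (hn : finrank ℝ V < n) (σ s : ℝ) :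
    ∃ C, 0 ≤ C ∧ ∀ {m : V → ℂ} {A : ℝ}, IsMikhlinSymbol n σ A m → ∀ {v : V → F} {M : ℝ},
      Integrable (fun ξ ↦ m ξ • v ξ) → Integrable (fun ξ ↦ ‖ξ‖ ^ s • v ξ) →
      (∀ y, ‖𝓕⁻ (fun ξ ↦ ‖ξ‖ ^ s • v ξ) y‖ ≤ M) → ∀ (x : V), ∀ {t : ℝ}, 0 < t →
        ‖lowPass (fun ξ ↦ m ξ • v ξ) x t - lowPass (fun ξ ↦ m ξ • v ξ) x (t / 2)‖ ≤
          C * A * M * t ^ (σ - s) := by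
  obtain ⟨C, hC, hCle⟩ :=
    exists_norm_fourierInv_cutoff_smul_le (F := F) hn (contDiff_weightedAnnularCutoff s)
      (hasCompactSupport_weightedAnnularCutoff s) (zero_notMem_tsupport_weightedAnnularCutoff s) σ
  refine ⟨C, hC, fun {m A} hm v M hmv hw hM x t ht ↦ ?_⟩
  set ψ : V → ℝ := weightedAnnularCutoff s
  have hblock : ∀ ξ, annularCutoff (t⁻¹ • ξ) • (m ξ • v ξ) =
      t ^ (-s) • ((ψ (t⁻¹ • ξ) • m ξ) • (‖ξ‖ ^ s • v ξ)) := fun ξ ↦ by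
    rw [annularCutoff_inv_smul_eq s ht, mul_smul, mul_smul, smul_comm (‖ξ‖ ^ s), smul_assoc]
  have hpull : 𝓕⁻ (fun ξ ↦ annularCutoff (t⁻¹ • ξ) • (m ξ • v ξ)) x =
      t ^ (-s) • 𝓕⁻ (fun ξ ↦ (ψ (t⁻¹ • ξ) • m ξ) • (‖ξ‖ ^ s • v ξ)) x := by
    simp only [hblock, Real.fourierInv_eq, smul_comm _ (t ^ (-s)), integral_smul]
  rw [lowPass_sub_lowPass_half hmv, hpull, norm_smul, Real.norm_of_nonneg (by positivity)]
  calc t ^ (-s) * ‖𝓕⁻ (fun ξ ↦ (ψ (t⁻¹ • ξ) • m ξ) • (‖ξ‖ ^ s • v ξ)) x‖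
      ≤ t ^ (-s) * (C * A * t ^ σ * M) := by
        gcongr
        exact hCle hm hw hM ht x
    _ = C * A * M * t ^ (σ - s) := by
        rw [sub_eq_add_neg, Real.rpow_add ht]
        ring

end LittlewoodPaley

section DyadicSum

theorem two_rpow_neg_lt_one {ε : ℝ} (hε : 0 < ε) : (2 : ℝ) ^ (-ε) < 1 :=
  Real.rpow_lt_one_of_one_lt_of_neg one_lt_two (neg_lt_zero.2 hε)

variable {G : Type*} [NormedAddCommGroup G] {f : ℝ → G} {a : G} {P Q ε R : ℝ}

theorem dist_le_of_norm_sub_half_le_rpow_neg (hε : 0 < ε)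
    (hf : ∀ t, 0 < t → ‖f t - f (t / 2)‖ ≤ P * t ^ (-ε)) (ha : Tendsto f atTop (𝓝 a))
    (hR : 0 < R) : dist (f R) a ≤ P * (2 * R) ^ (-ε) / (1 - 2 ^ (-ε)) := by
  have hlim : Tendsto (fun k : ℕ ↦ f (2 ^ k * R)) atTop (𝓝 a) :=
    ha.comp ((tendsto_pow_atTop_atTop_of_one_lt one_lt_two).atTop_mul_const hR)
  have hstep : ∀ k : ℕ, dist (f (2 ^ k * R)) (f (2 ^ (k + 1) * R)) ≤
      P * (2 * R) ^ (-ε) * (2 ^ (-ε)) ^ k := by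
    intro k
    have h := hf (2 ^ (k + 1) * R) (by positivity)
    have hhalf : 2 ^ (k + 1) * R / 2 = 2 ^ k * R := by ring
    have hpow : ((2 : ℝ) ^ (k + 1) * R) ^ (-ε) = (2 * R) ^ (-ε) * (2 ^ (-ε)) ^ k := by
      rw [pow_succ, mul_assoc, Real.mul_rpow (by positivity) (by positivity),
        Real.rpow_pow_comm zero_le_two, mul_comm]
    rwa [dist_comm, dist_eq_norm, mul_assoc, ← hpow, ← hhalf]
  simpa using dist_le_of_le_geometric_of_tendsto₀ _ _ (two_rpow_neg_lt_one hε) hstep hlim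

theorem dist_le_of_norm_sub_half_le_rpow (hε : 0 < ε)
    (hf : ∀ t, 0 < t → ‖f t - f (t / 2)‖ ≤ Q * t ^ ε) (ha : Tendsto f (𝓝[>] 0) (𝓝 a))
    (hR : 0 < R) : dist (f R) a ≤ Q * R ^ ε / (1 - 2 ^ (-ε)) := by
  have hlim : Tendsto (fun k : ℕ ↦ f (R / 2 ^ k)) atTop (𝓝 a) := by
    refine ha.comp (tendsto_nhdsWithin_iff.2 ⟨?_, .of_forall fun k ↦ mem_Ioi.2 (by positivity)⟩)
    exact (tendsto_pow_atTop_atTop_of_one_lt one_lt_two).const_div_atTop R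
  have hstep : ∀ k : ℕ, dist (f (R / 2 ^ k)) (f (R / 2 ^ (k + 1))) ≤
      Q * R ^ ε * (2 ^ (-ε)) ^ k := by
    intro k
    have h := hf (R / 2 ^ k) (by positivity)
    have hpow : (R / 2 ^ k) ^ ε = R ^ ε * (2 ^ (-ε)) ^ k := by
      rw [Real.div_rpow hR.le (by positivity), Real.rpow_neg zero_le_two, inv_pow,
        Real.rpow_pow_comm zero_le_two, div_eq_mul_inv]
    rwa [dist_eq_norm, mul_assoc, ← hpow, pow_succ, ← div_div]
  simpa using dist_le_of_le_geometric_of_tendsto₀ _ _ (two_rpow_neg_lt_one hε) hstep hlim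

theorem le_two_mul_sqrt_mul_sqrt {a b c : ℝ} (ha : 0 ≤ a) (hb : 0 ≤ b)
    (h : ∀ r, 0 < r → c ≤ a * r⁻¹ + b * r) : c ≤ 2 * (√a * √b) := by
  rcases le_total c 0 with hc | hc
  · exact hc.trans (by positivity)
  have hquad : ∀ r : ℝ, 0 ≤ b * (r * r) + -c * r + a := by
    intro r
    rcases le_or_gt r 0 with hr | hr
    · nlinarith [mul_nonneg hb (mul_self_nonneg r), mul_nonneg hc (neg_nonneg.2 hr)]
    · have hcr : c * r ≤ (a * r⁻¹ + b * r) * r := by gcongr; exact h r hr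
      have hexpand : (a * r⁻¹ + b * r) * r = a + b * (r * r) := by field_simp
      linarith
  have hdiscrim : c ^ 2 ≤ (2 * (√a * √b)) ^ 2 := by
    rw [mul_pow, mul_pow, Real.sq_sqrt ha, Real.sq_sqrt hb]
    have := discrim_le_zero hquad
    rw [discrim] at this
    linarith
  exact le_of_sq_le_sq hdiscrim (by positivity)

theorem norm_le_of_norm_sub_half_le_rpow (hε : 0 < ε)
    (hP : ∀ t, 0 < t → ‖f t - f (t / 2)‖ ≤ P * t ^ (-ε))
    (hQ : ∀ t, 0 < t → ‖f t - f (t / 2)‖ ≤ Q * t ^ ε)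
    (htop : Tendsto f atTop (𝓝 a)) (hzero : Tendsto f (𝓝[>] 0) (𝓝 0)) :
    ‖a‖ ≤ 2 / (1 - 2 ^ (-ε)) * (√P * √Q) := by
  have hden : (0 : ℝ) < 1 - 2 ^ (-ε) := sub_pos.2 (two_rpow_neg_lt_one hε)
  have hP0 : 0 ≤ P := by simpa using (norm_nonneg _).trans (hP 1 one_pos)
  have hQ0 : 0 ≤ Q := by simpa using (norm_nonneg _).trans (hQ 1 one_pos)
  rw [div_mul_eq_mul_div, le_div_iff₀ hden]
  refine le_two_mul_sqrt_mul_sqrt hP0 hQ0 fun r hr0 ↦ ?_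
  obtain ⟨R, hR, rfl⟩ : ∃ R : ℝ, 0 < R ∧ R ^ ε = r :=
    ⟨r ^ ε⁻¹, by positivity, Real.rpow_inv_rpow hr0.le hε.ne'⟩
  rw [← Real.rpow_neg hR.le, ← le_div_iff₀ hden, add_div]
  have hmono : (2 * R) ^ (-ε) ≤ R ^ (-ε) :=
    Real.rpow_le_rpow_of_nonpos hR (by linarith) (neg_nonpos.2 hε.le)
  calc ‖a‖ = dist a 0 := (dist_zero_right a).symm
    _ ≤ dist (f R) a + dist (f R) 0 := dist_triangle_left a 0 (f R)
    _ ≤ P * (2 * R) ^ (-ε) / (1 - 2 ^ (-ε)) + Q * R ^ ε / (1 - 2 ^ (-ε)) :=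
        add_le_add (dist_le_of_norm_sub_half_le_rpow_neg hε hP htop hR)
          (dist_le_of_norm_sub_half_le_rpow hε hQ hzero hR)
    _ ≤ P * R ^ (-ε) / (1 - 2 ^ (-ε)) + Q * R ^ ε / (1 - 2 ^ (-ε)) := by gcongr

end DyadicSum

section Interpolation

theorem rpow_le_rpow_sub_add_rpow_add {r ε : ℝ} (hr : 0 < r) (hε : 0 ≤ ε) (σ : ℝ) :
    r ^ σ ≤ r ^ (σ - ε) + r ^ (σ + ε) := by
  rcases le_total r 1 with h | h
  · exact (Real.rpow_le_rpow_of_exponent_ge hr h (sub_le_self σ hε)).trans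
      (le_add_of_nonneg_right (by positivity))
  · exact (Real.rpow_le_rpow_of_exponent_le h (le_add_of_nonneg_right hε)).trans
      (le_add_of_nonneg_left (by positivity))

theorem integrable_smul_of_ae_norm_le {α 𝕜 F : Type*} [MeasurableSpace α] {μ : Measure α}
    [NormedRing 𝕜] [NormedAddCommGroup F] [Module 𝕜 F] [IsBoundedSMul 𝕜 F] {k : α → 𝕜} {W : α → ℝ}
    {v : α → F} {c : ℝ} (hk : AEStronglyMeasurable k μ) (hv : AEStronglyMeasurable v μ)
    (hW : Integrable (fun ξ ↦ W ξ * ‖v ξ‖) μ) (hle : ∀ᵐ ξ ∂μ, ‖k ξ‖ ≤ c * W ξ) :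
    Integrable (fun ξ ↦ k ξ • v ξ) μ := by
  refine (hW.const_mul c).mono' (hk.smul hv) (hle.mono fun ξ hξ ↦ (norm_smul_le _ _).trans ?_)
  rw [← mul_assoc]
  gcongr

theorem IsMikhlinSymbol.aestronglyMeasurable {E F : Type*} [NormedAddCommGroup E]
    [NormedSpace ℝ E] [MeasurableSpace E] [OpensMeasurableSpace E] [SecondCountableTopology E]
    {μ : Measure E} [NullSingletonClass μ] [NormedAddCommGroup F] [NormedSpace ℝ F] {n : ℕ}
    {σ A : ℝ} {m : E → F} (hm : IsMikhlinSymbol n σ A m) : AEStronglyMeasurable m μ := by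
  rw [← Measure.restrict_eq_self_of_ae_mem (Measure.ae_ne μ (0 : E))]
  exact hm.contDiffOn.continuousOn.aestronglyMeasurable isOpen_compl_singleton.measurableSet

theorem IsMikhlinSymbol.integrable_smul {E F : Type*} [NormedAddCommGroup E] [NormedSpace ℝ E]
    [MeasurableSpace E] [OpensMeasurableSpace E] [SecondCountableTopology E] {μ : Measure E}
    [NullSingletonClass μ] [NormedAddCommGroup F] [NormedSpace ℂ F] {n : ℕ} {σ A ε : ℝ}
    {m : E → ℂ} (hm : IsMikhlinSymbol n σ A m) (hA : 0 ≤ A) (hε : 0 ≤ ε) {v : E → F}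
    (hv : AEStronglyMeasurable v μ)
    (hint : Integrable (fun ξ ↦ (‖ξ‖ ^ (σ - ε) + ‖ξ‖ ^ (σ + ε)) * ‖v ξ‖) μ) :
    Integrable (fun ξ ↦ m ξ • v ξ) μ := by
  refine integrable_smul_of_ae_norm_le hm.aestronglyMeasurable hv hint (c := A) ?_
  filter_upwards [Measure.ae_ne μ 0] with ξ hξ
  refine (hm.norm_le hξ).trans ?_
  gcongr
  exact rpow_le_rpow_sub_add_rpow_add (norm_pos_iff.2 hξ) hε σ

theorem integrable_norm_rpow_smul_of_le {E F : Type*} [NormedAddCommGroup E] [MeasurableSpace E]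
    [OpensMeasurableSpace E] {μ : Measure E} [NormedAddCommGroup F] [NormedSpace ℝ F] {s : ℝ}
    {W : E → ℝ} {v : E → F} (hv : AEStronglyMeasurable v μ)
    (hW : Integrable (fun ξ ↦ W ξ * ‖v ξ‖) μ) (hle : ∀ ξ, ‖ξ‖ ^ s ≤ W ξ) :
    Integrable (fun ξ ↦ ‖ξ‖ ^ s • v ξ) μ := by
  refine integrable_smul_of_ae_norm_le (measurable_norm.pow_const s).aestronglyMeasurable hv hW
    (c := 1) (.of_forall fun ξ ↦ ?_)
  rw [Real.norm_of_nonneg (by positivity), one_mul]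
  exact hle ξ

variable {V : Type*} [NormedAddCommGroup V] [InnerProductSpace ℝ V] [FiniteDimensional ℝ V]
  [MeasurableSpace V] [BorelSpace V] [Nontrivial V]

theorem exists_norm_fourierInv_symbol_smul_le {F : Type*} [NormedAddCommGroup F]
    [NormedSpace ℂ F] [CompleteSpace F] {n : ℕ} (hn : finrank ℝ V < n) (σ : ℝ) {ε : ℝ}
    (hε : 0 < ε) :
    ∃ C, 0 < C ∧ ∀ {m : V → ℂ} {A : ℝ}, IsMikhlinSymbol n σ A m → ∀ {v : V → F},
      AEStronglyMeasurable v →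
      Integrable (fun ξ ↦ (‖ξ‖ ^ (σ - ε) + ‖ξ‖ ^ (σ + ε)) * ‖v ξ‖) → ∀ {Mp Mm : ℝ},
      (∀ y, ‖𝓕⁻ (fun ξ ↦ ‖ξ‖ ^ (σ + ε) • v ξ) y‖ ≤ Mp) →
      (∀ y, ‖𝓕⁻ (fun ξ ↦ ‖ξ‖ ^ (σ - ε) • v ξ) y‖ ≤ Mm) →
      ∀ x, ‖𝓕⁻ (fun ξ ↦ m ξ • v ξ) x‖ ≤ C * A * √Mp * √Mm := by
  obtain ⟨Cp, hCp, hp⟩ :=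
    exists_norm_lowPass_sub_lowPass_half_le (V := V) (F := F) hn σ (σ + ε)
  obtain ⟨Cm, hCm, hm⟩ :=
    exists_norm_lowPass_sub_lowPass_half_le (V := V) (F := F) hn σ (σ - ε)
  have hden : (0 : ℝ) < 1 - 2 ^ (-ε) := sub_pos.2 (two_rpow_neg_lt_one hε)
  refine ⟨2 / (1 - 2 ^ (-ε)) * (√Cp * √Cm) + 1, by positivity,
    fun {m A} hA v hv hint Mp Mm hMp hMm x ↦ ?_⟩
  have hA0 := hA.const_nonneg
  have hmv := hA.integrable_smul hA0 hε.le hv hint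
  have hvp := integrable_norm_rpow_smul_of_le (s := σ + ε) hv hint fun ξ ↦
    le_add_of_nonneg_left (by positivity)
  have hvm := integrable_norm_rpow_smul_of_le (s := σ - ε) hv hint fun ξ ↦
    le_add_of_nonneg_right (by positivity)
  have hbound := norm_le_of_norm_sub_half_le_rpow hε
    (fun t ht ↦ by simpa using hp hA hmv hvp hMp x ht)
    (fun t ht ↦ by simpa using hm hA hmv hvm hMm x ht)
    (tendsto_lowPass_atTop hmv x) (tendsto_lowPass_nhdsGT_zero hmv x)
  calc ‖𝓕⁻ (fun ξ ↦ m ξ • v ξ) x‖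
      ≤ 2 / (1 - 2 ^ (-ε)) * (√(Cp * A * Mp) * √(Cm * A * Mm)) := hbound
    _ = 2 / (1 - 2 ^ (-ε)) * (√Cp * √Cm) * (√A * √A) * √Mp * √Mm := by
        rw [Real.sqrt_mul (by positivity), Real.sqrt_mul hCp, Real.sqrt_mul (by positivity),
          Real.sqrt_mul hCm]
        ring
    _ ≤ (2 / (1 - 2 ^ (-ε)) * (√Cp * √Cm) + 1) * A * √Mp * √Mm := by
        rw [Real.mul_self_sqrt hA0]
        gcongr
        exact le_add_of_nonneg_right zero_le_one

theorem pseudodifferential_interpolation_bound_general (σ : ℝ) {ε : ℝ} (hε : 0 < ε) :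
    ∃ C : ℝ, 0 < C ∧ ∀ {m : V → V → ℂ} {A : ℝ},
      (∀ x, IsMikhlinSymbol (finrank ℝ V + 1) σ A (m x)) → ∀ {v : V → ℂ},
      AEStronglyMeasurable v →
      Integrable (fun ξ ↦ (‖ξ‖ ^ (σ - ε) + ‖ξ‖ ^ (σ + ε)) * ‖v ξ‖) → ∀ {Mp Mm : ℝ},
      (∀ x, ‖∫ ξ, ((‖ξ‖ ^ (σ + ε) : ℝ) : ℂ) * v ξ *
        Complex.exp ((⟪x, ξ⟫_ℝ : ℂ) * Complex.I)‖ ≤ Mp) →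
      (∀ x, ‖∫ ξ, ((‖ξ‖ ^ (σ - ε) : ℝ) : ℂ) * v ξ *
        Complex.exp ((⟪x, ξ⟫_ℝ : ℂ) * Complex.I)‖ ≤ Mm) →
      ∀ x, ‖∫ ξ, m x ξ * v ξ * Complex.exp ((⟪x, ξ⟫_ℝ : ℂ) * Complex.I)‖ ≤
        C * A * √Mp * √Mm := by
  obtain ⟨C, hC, hbound⟩ :=
    exists_norm_fourierInv_symbol_smul_le (V := V) (F := ℂ) (Nat.lt_succ_self _) σ hε
  refine ⟨C, hC, fun {m A} hm v hv hint Mp Mm hMp hMm x ↦ ?_⟩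
  have hweight : ∀ {s M : ℝ}, (∀ x, ‖∫ ξ, ((‖ξ‖ ^ s : ℝ) : ℂ) * v ξ *
      Complex.exp ((⟪x, ξ⟫_ℝ : ℂ) * Complex.I)‖ ≤ M) →
      ∀ y, ‖𝓕⁻ (fun ξ ↦ ‖ξ‖ ^ s • v ξ) y‖ ≤ M := fun {s M} hM y ↦ by
    have h := hM ((2 * Real.pi) • y)
    rw [← fourierInv_two_pi_inv_smul, inv_smul_smul₀ Real.two_pi_pos.ne'] at h
    simpa only [Complex.real_smul] using h
  rw [← fourierInv_two_pi_inv_smul]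
  exact hbound (hm x) hv hint (hweight hMp) (hweight hMm) _

end Interpolation

/-- Interpolation bound for a variable-coefficient pseudo-differential
operator with symbol `m(x,ξ)` of order `σ`:
`‖𝒯f‖_∞ ≲ ‖Λ^{σ+ε}f‖_∞^{1/2} ‖Λ^{σ−ε}f‖_∞^{1/2}`. -/
theorem pseudodifferential_interpolation_bound
    (d : ℕ) (hd : 1 ≤ d) (σ ε : ℝ) (hσ : -(d : ℝ) < σ) (hε : 0 < ε) (hε1 : ε < 1) :
    ∃ C : ℝ, 0 < C ∧
      ∀ (m : EuclideanSpace ℝ (Fin d) → EuclideanSpace ℝ (Fin d) → ℂ)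
        (v : EuclideanSpace ℝ (Fin d) → ℂ),
        (∀ x : EuclideanSpace ℝ (Fin d), ContDiffOn ℝ (d + 2) (m x) {0}ᶜ) →
        (∀ x : EuclideanSpace ℝ (Fin d), ∀ k : ℕ, k ≤ d + 2 →
          ∀ ξ : EuclideanSpace ℝ (Fin d), ξ ≠ 0 →
            ‖iteratedFDerivWithin ℝ k (m x) {0}ᶜ ξ‖ ≤ ‖ξ‖ ^ (σ - (k : ℝ))) →
        Measurable v →
        Integrable (fun ξ : EuclideanSpace ℝ (Fin d) =>
          (‖ξ‖ ^ (σ - ε) + ‖ξ‖ ^ (σ + ε)) * ‖v ξ‖) →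
        ∀ Mp Mm : ℝ,
          (∀ x : EuclideanSpace ℝ (Fin d),
            ‖∫ ξ : EuclideanSpace ℝ (Fin d),
                ((‖ξ‖ ^ (σ + ε) : ℝ) : ℂ) * v ξ * Complex.exp ((⟪x, ξ⟫_ℝ : ℂ) * Complex.I)‖
              ≤ Mp) →
          (∀ x : EuclideanSpace ℝ (Fin d),
            ‖∫ ξ : EuclideanSpace ℝ (Fin d),
                ((‖ξ‖ ^ (σ - ε) : ℝ) : ℂ) * v ξ * Complex.exp ((⟪x, ξ⟫_ℝ : ℂ) * Complex.I)‖
              ≤ Mm) →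
          ∀ x : EuclideanSpace ℝ (Fin d),
            ‖∫ ξ : EuclideanSpace ℝ (Fin d),
                m x ξ * v ξ * Complex.exp ((⟪x, ξ⟫_ℝ : ℂ) * Complex.I)‖ ≤
              C * Real.sqrt Mp * Real.sqrt Mm := by
  have : Nonempty (Fin d) := ⟨⟨0, hd⟩⟩
  obtain ⟨C, hC, hbound⟩ :=
    pseudodifferential_interpolation_bound_general (V := EuclideanSpace ℝ (Fin d)) σ hε
  refine ⟨C, hC, fun m v hm hmle hv hint Mp Mm hMp hMm x ↦ ?_⟩
  have hsymb : ∀ x, IsMikhlinSymbol (finrank ℝ (EuclideanSpace ℝ (Fin d)) + 1) σ 1 (m x) := by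
    rw [finrank_euclideanSpace_fin]
    exact fun x ↦ ⟨(hm x).of_le (by exact_mod_cast Nat.le_succ _),
      fun k hk ξ hξ ↦ by simpa using hmle x k (hk.trans (Nat.le_succ _)) ξ hξ⟩
  simpa using hbound hsymb hv.aestronglyMeasurable hint hMp hMm x
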